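/- Let (A, b, c) be an LP in dual form with A an m×n real matrix, and let (X_P, X_Q) be a fractional automorphism of (A, b, c) in which X_P is the partition matrix of a partition U of the column indices. Then restricting the feasible region to the fixed space of X_P does not change the set of attainable objective values in the following sense: for every x ∈ ℝ^n with A·x ≤ b entrywise, the vector X_P·x satisfies A·(X_P·x) ≤ b entrywise, X_P·(X_P·x) = X_P·x, and ⟨c, X_P·x⟩ = ⟨c, x⟩. Consequently, the infimum of ⟨c, x⟩ over {x : A·x ≤ b} equals the infimum of ⟨c, x⟩ over {x : A·x ≤ b and X_P·x = x}. -/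

import Mathlib

open Matrix

/-- A square real matrix is doubly stochastic. -/
def IsDoublyStochastic {m : ℕ} (S : Matrix (Fin m) (Fin m) ℝ) : Prop :=
  (∀ i j, 0 ≤ S i j) ∧ (∀ i, ∑ j, S i j = 1) ∧ (∀ j, ∑ i, S i j = 1)

/-- A fractional automorphism of the LP `(A, b, c)` in dual form. -/
def IsFractionalAutomorphism {m n : ℕ} (A : Matrix (Fin m) (Fin n) ℝ)
    (b : Fin m → ℝ) (c : Fin n → ℝ)
    (XP : Matrix (Fin n) (Fin n) ℝ) (XQ : Matrix (Fin m) (Fin m) ℝ) : Prop :=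
  IsDoublyStochastic XP ∧ IsDoublyStochastic XQ ∧
    A * XP = XQ * A ∧ XP.vecMul c = c ∧ XQ.mulVec b = b

/-- The partition matrix of a partition (given by the class map `f`). -/
noncomputable def partitionMatrix {n k : ℕ} (f : Fin n → Fin k) :
    Matrix (Fin n) (Fin n) ℝ :=
  fun i j =>
    if f i = f j then (1 : ℝ) / ((Finset.univ.filter fun l => f l = f i).card : ℝ)
    else 0

/-!
Averaging over the classes of a partition is a projection, so `X_P x` lies in the fixed space of
`X_P`. It stays feasible because `A (X_P x) = X_Q (A x) ≤ X_Q b = b`, where the inequality holds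
because `X_Q` has nonnegative entries, and `cᵀ X_P = cᵀ` keeps the objective value.
-/

section PartitionMatrix

variable {n k : ℕ} (f : Fin n → Fin k)

theorem sum_partitionMatrix_row (i : Fin n) : ∑ j, partitionMatrix f i j = 1 := by
  have class_nonempty : (Finset.univ.filter fun l => f l = f i).Nonempty := ⟨i, by simp⟩
  have card_ne_zero : ((Finset.univ.filter fun l => f l = f i).card : ℝ) ≠ 0 :=
    Nat.cast_ne_zero.mpr class_nonempty.card_ne_zero
  simp only [partitionMatrix, eq_comm (a := f i), ← Finset.sum_filter, Finset.sum_const,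
    nsmul_eq_mul, mul_one_div_cancel card_ne_zero]

theorem partitionMatrix_row_congr {i j : Fin n} (hij : f i = f j) :
    partitionMatrix f i = partitionMatrix f j := by
  funext l
  simp only [partitionMatrix, hij]

theorem partitionMatrix_apply_of_ne {i j : Fin n} (hij : f i ≠ f j) :
    partitionMatrix f i j = 0 :=
  if_neg hij

theorem isIdempotentElem_partitionMatrix : IsIdempotentElem (partitionMatrix f) := by
  ext i j
  have mul_row (l : Fin n) : partitionMatrix f i l * partitionMatrix f l j =
      partitionMatrix f i l * partitionMatrix f i j := by
    by_cases hil : f i = f l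
    · rw [partitionMatrix_row_congr f hil]
    · rw [partitionMatrix_apply_of_ne f hil, zero_mul, zero_mul]
  calc (partitionMatrix f * partitionMatrix f) i j
      = ∑ l, partitionMatrix f i l * partitionMatrix f l j := Matrix.mul_apply
    _ = ∑ l, partitionMatrix f i l * partitionMatrix f i j :=
        Finset.sum_congr rfl fun l _ => mul_row l
    _ = partitionMatrix f i j := by
        rw [← Finset.sum_mul, sum_partitionMatrix_row, one_mul]

end PartitionMatrix

theorem image_eq_image_sep_fixed {α β : Type*} {s : Set α} {p : α → α} {g : α → β}
    (h : ∀ x ∈ s, p x ∈ s ∧ p (p x) = p x ∧ g (p x) = g x) :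
    g '' s = g '' {x | x ∈ s ∧ p x = x} := by
  refine Set.Subset.antisymm ?_ (Set.image_mono fun _ hx => hx.1)
  rintro _ ⟨x, hx, rfl⟩
  obtain ⟨mem, fixed, value⟩ := h x hx
  exact ⟨p x, ⟨mem, fixed⟩, value⟩

section OrderedSemiring

variable {ι κ R : Type*} [Fintype κ] [Semiring R] [PartialOrder R] [IsOrderedRing R]

theorem mulVec_le_mulVec_of_nonneg {M : Matrix ι κ R} (hM : ∀ i j, 0 ≤ M i j)
    {u v : κ → R} (huv : u ≤ v) : M *ᵥ u ≤ M *ᵥ v :=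
  fun i => dotProduct_le_dotProduct_of_nonneg_left huv (hM i)

variable [Fintype ι]

theorem mulVec_mulVec_le_of_mul_eq_mul {A : Matrix ι κ R} {b : ι → R}
    {P : Matrix κ κ R} {Q : Matrix ι ι R} (hQ : ∀ i j, 0 ≤ Q i j)
    (hAP : A * P = Q * A) (hb : Q *ᵥ b ≤ b) {x : κ → R} (hx : A *ᵥ x ≤ b) :
    A *ᵥ (P *ᵥ x) ≤ b :=
  calc A *ᵥ (P *ᵥ x) = Q *ᵥ (A *ᵥ x) := by rw [mulVec_mulVec, hAP, ← mulVec_mulVec]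
    _ ≤ Q *ᵥ b := mulVec_le_mulVec_of_nonneg hQ hx
    _ ≤ b := hb

theorem fixed_space_restriction_preserves_values_general
    {A : Matrix ι κ R} {b : ι → R} {c : κ → R} {P : Matrix κ κ R} {Q : Matrix ι ι R}
    (hP : IsIdempotentElem P) (hQ : ∀ i j, 0 ≤ Q i j) (hAP : A * P = Q * A)
    (hc : c ᵥ* P = c) (hb : Q *ᵥ b ≤ b) :
    (∀ x, A *ᵥ x ≤ b →
      A *ᵥ (P *ᵥ x) ≤ b ∧ P *ᵥ (P *ᵥ x) = P *ᵥ x ∧ c ⬝ᵥ P *ᵥ x = c ⬝ᵥ x) ∧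
    (c ⬝ᵥ ·) '' {x | A *ᵥ x ≤ b} = (c ⬝ᵥ ·) '' {x | A *ᵥ x ≤ b ∧ P *ᵥ x = x} := by
  have projection : ∀ x, A *ᵥ x ≤ b →
      A *ᵥ (P *ᵥ x) ≤ b ∧ P *ᵥ (P *ᵥ x) = P *ᵥ x ∧ c ⬝ᵥ P *ᵥ x = c ⬝ᵥ x := by
    intro x hx
    refine ⟨mulVec_mulVec_le_of_mul_eq_mul hQ hAP hb hx, ?_, ?_⟩
    · rw [mulVec_mulVec, hP.eq]
    · rw [dotProduct_mulVec, hc]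
  exact ⟨projection, image_eq_image_sep_fixed projection⟩

end OrderedSemiring

/-- Restricting the feasible region to the fixed space of
`X_P` does not change the attainable objective values: every feasible `x`
projects to a feasible fixed point `X_P·x` with the same objective value,
and the infima coincide. -/
theorem fixed_space_restriction_preserves_values {m n k : ℕ}
    (A : Matrix (Fin m) (Fin n) ℝ) (b : Fin m → ℝ) (c : Fin n → ℝ)
    (f : Fin n → Fin k) (XQ : Matrix (Fin m) (Fin m) ℝ)
    (hFA : IsFractionalAutomorphism A b c (partitionMatrix f) XQ) :
    (∀ x : Fin n → ℝ, A.mulVec x ≤ b →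
      A.mulVec ((partitionMatrix f).mulVec x) ≤ b ∧
      (partitionMatrix f).mulVec ((partitionMatrix f).mulVec x) =
        (partitionMatrix f).mulVec x ∧
      c ⬝ᵥ (partitionMatrix f).mulVec x = c ⬝ᵥ x) ∧
    sInf {r : ℝ | ∃ x : Fin n → ℝ, A.mulVec x ≤ b ∧ c ⬝ᵥ x = r} =
      sInf {r : ℝ | ∃ x : Fin n → ℝ,
        (A.mulVec x ≤ b ∧ (partitionMatrix f).mulVec x = x) ∧ c ⬝ᵥ x = r} := by
  obtain ⟨-, ⟨hQ, -⟩, hAP, hc, hb⟩ := hFA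
  exact (fixed_space_restriction_preserves_values_general (isIdempotentElem_partitionMatrix f)
    hQ hAP hc hb.le).imp_right (congrArg sInf)
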